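/- For every β > 0 there exists α < 1 such that for every sufficiently large n, there exist a set A ⊆ {1,...,n} with |A| ≥ n − n^α and a coloring c : A → {1,...,⌊n^β⌋} such that every 3-term arithmetic progression contained in A is rainbow, i.e., whenever a, a+t, a+2t ∈ A with t ≠ 0, the three values c(a), c(a+t), c(a+2t) are pairwise distinct. -/

import Mathlib

/-!
Write the numbers below `m ^ d` in base `m`, and discard the words whose sum of squared digits is
far from the mean; by Hoeffding's inequality only an exponentially small proportion is lost. Color
a word by the dyadic scales and the parity of each digit together with its cell in a partition
of all words into codes of large minimum distance. If two terms of a progression `u, v, w` have the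
same color, the scales and parities rule out carries, so that `u + w = 2 v` holds digit by digit
and `2 ‖u - v‖² = ‖u‖² + ‖w‖² - 2 ‖v‖²`. The right-hand side is small because the three words are
typical, so the two terms of equal color differ in few places, and the code forces them to coincide.
There are only `O((log m) ^ 2)` scales and parities per digit and the codes number at most
`2 ^ d * m ^ (δ * d)`, so for `m` large and `δ` small in terms of `β` at most `n ^ β` colors occur.
-/

section Coloring

lemma colorable_of_degree_lt {V : Type*} [Fintype V] (G : SimpleGraph V) [DecidableRel G.Adj]
    {k : ℕ} (hG : ∀ v, G.degree v < k) : G.Colorable k := by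
  classical
  suffices h : ∀ s : Finset V, ∃ c : V → Fin k, ∀ x ∈ s, ∀ y ∈ s, G.Adj x y → c x ≠ c y by
    obtain ⟨c, hc⟩ := h Finset.univ
    exact ⟨SimpleGraph.Coloring.mk c fun {x y} => hc x (Finset.mem_univ x) y (Finset.mem_univ y)⟩
  intro s
  induction s using Finset.induction_on with
  | empty => exact ⟨fun v => ⟨0, (Nat.zero_le _).trans_lt (hG v)⟩, by simp⟩
  | insert a s _ ih =>
    obtain ⟨c, hc⟩ := ih
    have h_card : ((G.neighborFinset a).image c).card < (Finset.univ : Finset (Fin k)).card := by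
      simpa using Finset.card_image_le.trans_lt (hG a)
    obtain ⟨e, -, he⟩ := Finset.exists_mem_notMem_of_card_lt_card h_card
    have h_free : ∀ y, G.Adj a y → c y ≠ e := fun y hay hye =>
      he (Finset.mem_image.2 ⟨y, (G.mem_neighborFinset a y).2 hay, hye⟩)
    refine ⟨Function.update c a e, fun x hx y hy hxy => ?_⟩
    rw [Finset.mem_insert] at hx hy
    rcases eq_or_ne x a with rfl | hxa
    · rw [Function.update_self, Function.update_of_ne hxy.ne']
      exact (h_free y hxy).symm
    · rcases eq_or_ne y a with rfl | hya
      · rw [Function.update_self, Function.update_of_ne hxa]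
        exact h_free x hxy.symm
      · rw [Function.update_of_ne hxa, Function.update_of_ne hya]
        exact hc x (hx.resolve_left hxa) y (hy.resolve_left hya) hxy

end Coloring

section Hamming

open Finset

variable {ι α : Type*} [Fintype ι] [Fintype α] [DecidableEq α] [Nonempty α]

lemma card_hammingDist_le [DecidableEq ι] (x : ι → α) (r : ℕ) :
    #{y | hammingDist x y ≤ r} ≤ 2 ^ Fintype.card ι * Fintype.card α ^ r := by
  let cylinder (s : Finset ι) : Finset (ι → α) :=
    Fintype.piFinset fun i => if i ∈ s then univ else {x i}
  have h_cover : ({y | hammingDist x y ≤ r} : Finset (ι → α)) ⊆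
      ({s | #s ≤ r} : Finset (Finset ι)).biUnion cylinder := by
    intro y hy
    refine mem_biUnion.2 ⟨({i | x i ≠ y i} : Finset ι), ?_, Fintype.mem_piFinset.2 fun i => ?_⟩
    · rw [mem_filter_univ] at hy ⊢
      exact hy
    · by_cases hi : x i = y i <;> simp [hi]
  have h_cylinder : ∀ s ∈ ({s | #s ≤ r} : Finset (Finset ι)),
      #(cylinder s) ≤ Fintype.card α ^ r := by
    intro s hs
    have h_card : #(cylinder s) = Fintype.card α ^ #s := by
      simp [cylinder, apply_ite card, prod_ite_mem, Fintype.card_piFinset]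
    rw [h_card]
    exact Nat.pow_le_pow_right Fintype.card_pos (by simpa using hs)
  calc #{y | hammingDist x y ≤ r}
      ≤ #(({s | #s ≤ r} : Finset (Finset ι)).biUnion cylinder) := card_le_card h_cover
    _ ≤ #{s : Finset ι | #s ≤ r} * Fintype.card α ^ r := card_biUnion_le_card_mul _ _ _ h_cylinder
    _ ≤ 2 ^ Fintype.card ι * Fintype.card α ^ r := by
      gcongr
      exact (card_filter_le _ _).trans (by simp)

/-- The graph on words in which two distinct words are adjacent when they differ in at most `r`
places; its proper colorings partition the words into codes of minimum distance larger than `r`. -/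
def hammingGraph (ι α : Type*) [Fintype ι] [DecidableEq α] (r : ℕ) : SimpleGraph (ι → α) where
  Adj x y := x ≠ y ∧ hammingDist x y ≤ r
  symm := ⟨fun x y h => ⟨h.1.symm, hammingDist_comm x y ▸ h.2⟩⟩
  loopless := ⟨fun _ h => h.1 rfl⟩

lemma colorable_hammingGraph (r : ℕ) :
    (hammingGraph ι α r).Colorable (2 ^ Fintype.card ι * Fintype.card α ^ r) := by
  classical
  refine colorable_of_degree_lt _ fun x => lt_of_lt_of_le ?_ (card_hammingDist_le x r)
  rw [← SimpleGraph.card_neighborFinset_eq_degree]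
  refine card_lt_card ((ssubset_iff_of_subset fun y hy => ?_).2 ⟨x, by simp, by simp⟩)
  exact mem_filter_univ y |>.2 ((SimpleGraph.mem_neighborFinset _ _ _).1 hy).2

end Hamming

section Concentration

open Finset MeasureTheory ProbabilityTheory
open scoped BigOperators

section Uniform

variable {Ω : Type*} [Fintype Ω] [MeasurableSpace Ω] [MeasurableSingletonClass Ω]

lemma measureReal_uniformOn_univ (s : Finset Ω) :
    (uniformOn (Set.univ : Set Ω)).real s = #s / Fintype.card Ω := by
  simp [Measure.real, uniformOn_univ]

lemma integral_uniformOn_univ [Nonempty Ω] (f : Ω → ℝ) :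
    ∫ x, f x ∂uniformOn (Set.univ : Set Ω) = 𝔼 x, f x := by
  rw [integral_fintype .of_finite, Fintype.expect_eq_sum_div_card, sum_div]
  refine sum_congr rfl fun x _ => ?_
  rw [← coe_singleton, measureReal_uniformOn_univ, card_singleton, Nat.cast_one, smul_eq_mul,
    one_div_mul_eq_div]

end Uniform

variable {α : Type*} [Fintype α] [Nonempty α] {a b ε : ℝ}

lemma card_filter_le_sum_sub_expect_le (ι : Type*) [Fintype ι] [DecidableEq ι] {g : α → ℝ}
    (hg : ∀ x, g x ∈ Set.Icc a b) (hε : 0 ≤ ε) :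
    (#{v : ι → α | ε * Fintype.card ι ≤ ∑ i, (g (v i) - 𝔼 x, g x)} : ℝ) ≤
      Real.exp (-(2 * ε ^ 2 / (b - a) ^ 2) * Fintype.card ι) *
        Fintype.card α ^ Fintype.card ι := by
  let _ : MeasurableSpace α := ⊤
  let P : Measure (ι → α) := Measure.pi fun _ => uniformOn Set.univ
  have hP : P = uniformOn Set.univ := by rw [← Set.pi_univ Set.univ, uniformOn_pi]
  have h_indep : iIndepFun (fun i (v : ι → α) => g (v i) - 𝔼 x, g x) P :=
    iIndepFun_pi (X := fun _ x => g x - 𝔼 y, g y) fun _ => (measurable_of_finite _).aemeasurable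
  have h_subG (i : ι) : HasSubgaussianMGF (fun v : ι → α => g (v i) - 𝔼 x, g x)
      ((‖b - a‖₊ / 2) ^ 2) P := by
    have h := hasSubgaussianMGF_of_mem_Icc (X := fun v : ι → α => g (v i)) (μ := P)
      (measurable_of_finite _).aemeasurable (ae_of_all _ fun v => hg (v i))
    rwa [integral_comp_eval (measurable_of_finite g).aestronglyMeasurable,
      integral_uniformOn_univ] at h
  have h_tail := HasSubgaussianMGF.measure_sum_ge_le_of_iIndepFun h_indep
    (s := univ) (fun i _ => h_subG i) (ε := ε * Fintype.card ι) (by positivity)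
  have h_exponent : -(ε * Fintype.card ι) ^ 2 / (2 * ((∑ _i : ι, (‖b - a‖₊ / 2) ^ 2 : NNReal) : ℝ))
      = -(2 * ε ^ 2 / (b - a) ^ 2) * Fintype.card ι := by
    simp only [sum_const, card_univ, nsmul_eq_mul, NNReal.coe_mul, NNReal.coe_natCast,
      NNReal.coe_pow, NNReal.coe_div, coe_nnnorm, NNReal.coe_ofNat, Real.norm_eq_abs, div_pow,
      sq_abs]
    by_cases hι : (Fintype.card ι : ℝ) = 0
    · simp [hι]
    · field_simp
  rwa [h_exponent, hP, ← coe_filter_univ, measureReal_uniformOn_univ, div_le_iff₀ (by positivity),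
    Fintype.card_fun, Nat.cast_pow] at h_tail

lemma card_filter_lt_abs_sum_sub_expect_le (ι : Type*) [Fintype ι] [DecidableEq ι] {g : α → ℝ}
    (hg : ∀ x, g x ∈ Set.Icc a b) (hε : 0 ≤ ε) :
    (#{v : ι → α | ε * Fintype.card ι < |∑ i, (g (v i) - 𝔼 x, g x)|} : ℝ) ≤
      2 * (Real.exp (-(2 * ε ^ 2 / (b - a) ^ 2) * Fintype.card ι) *
        Fintype.card α ^ Fintype.card ι) := by
  classical
  have h_upper := card_filter_le_sum_sub_expect_le ι hg hε
  have h_lower := card_filter_le_sum_sub_expect_le ι (g := fun x => -g x) (a := -b) (b := -a)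
    (fun x => ⟨neg_le_neg (hg x).2, neg_le_neg (hg x).1⟩) hε
  rw [neg_sub_neg] at h_lower
  have h_neg (v : ι → α) :
      ∑ i, (-g (v i) - 𝔼 x, -g x) = -∑ i, (g (v i) - 𝔼 x, g x) := by
    rw [expect_neg_distrib, ← sum_neg_distrib]
    exact sum_congr rfl fun i _ => by ring
  let upper : Finset (ι → α) := {v | ε * Fintype.card ι ≤ ∑ i, (g (v i) - 𝔼 x, g x)}
  let lower : Finset (ι → α) := {v | ε * Fintype.card ι ≤ ∑ i, (-g (v i) - 𝔼 x, -g x)}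
  have h_subset : ({v | ε * Fintype.card ι < |∑ i, (g (v i) - 𝔼 x, g x)|} : Finset (ι → α)) ⊆
      upper ∪ lower := fun v hv => by
    rw [mem_union, mem_filter_univ, mem_filter_univ, h_neg]
    exact (lt_abs.1 ((mem_filter_univ v).1 hv)).imp le_of_lt le_of_lt
  calc (#{v : ι → α | ε * Fintype.card ι < |∑ i, (g (v i) - 𝔼 x, g x)|} : ℝ)
      ≤ #upper + #lower := mod_cast (card_le_card h_subset).trans (card_union_le _ _)
    _ ≤ _ := by linarith

end Concentration

section DigitVectors

variable {m d : ℕ}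

/-- The last `d` digits of `a` in base `m`, least significant first. -/
def digitVec (m d : ℕ) [NeZero m] (a : ℕ) : Fin d → Fin m :=
  finFunctionFinEquiv.symm (Fin.ofNat (m ^ d) a)

lemma finFunctionFinEquiv_digitVec [NeZero m] {a : ℕ} (ha : a < m ^ d) :
    (finFunctionFinEquiv (digitVec m d a) : ℕ) = a := by
  rw [digitVec, Equiv.apply_symm_apply, Fin.val_ofNat, Nat.mod_eq_of_lt ha]

lemma digitVec_injOn [NeZero m] : Set.InjOn (digitVec m d) {a | a < m ^ d} := fun a ha b hb h => by
  rw [← finFunctionFinEquiv_digitVec ha, ← finFunctionFinEquiv_digitVec hb, h]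

/-- Two dyadic scales and a parity: digits sharing these data are within a factor two of each
other, both as distances from `0` and as distances from the base `m`, and have an integral
midpoint. -/
def digitClass (x : Fin m) : Fin (Nat.log 2 m + 1) × Fin (Nat.log 2 m + 1) × Fin 2 :=
  (⟨Nat.log 2 (x + 1), Nat.lt_succ_of_le (Nat.log_mono_right x.isLt)⟩,
    ⟨Nat.log 2 (m - x), Nat.lt_succ_of_le (Nat.log_mono_right (Nat.sub_le m x))⟩,
    Fin.ofNat 2 x)

lemma lt_two_mul_of_log_eq_log {p q : ℕ} (hp : p ≠ 0) (h : Nat.log 2 p = Nat.log 2 q) :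
    q < 2 * p :=
  calc q < 2 ^ (Nat.log 2 q + 1) := Nat.lt_pow_succ_log_self one_lt_two q
    _ = 2 * 2 ^ Nat.log 2 p := by rw [h, pow_succ']
    _ ≤ 2 * p := Nat.mul_le_mul_left 2 (Nat.pow_log_le_self 2 hp)

lemma le_two_mul_of_digitClass_eq {x y : Fin m} (h : digitClass x = digitClass y) :
    (x : ℕ) ≤ 2 * y ∧ 2 * (y : ℕ) < m + x := by
  simp only [digitClass, Prod.mk.injEq, Fin.mk.injEq] at h
  have h_zero := lt_two_mul_of_log_eq_log (Nat.succ_ne_zero y) h.1.symm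
  have h_base := lt_two_mul_of_log_eq_log (Nat.sub_ne_zero_of_lt y.isLt) h.2.1.symm
  omega

lemma mod_two_eq_of_digitClass_eq {x y : Fin m} (h : digitClass x = digitClass y) :
    (x : ℕ) % 2 = y % 2 := by
  simpa only [digitClass, Fin.val_ofNat] using congrArg (fun p => (p.2.2 : ℕ)) h

variable {u v w : Fin d → Fin m}

lemma finFunctionFinEquiv_add_eq_two_mul (h : ∀ i, (u i : ℕ) + w i = 2 * v i) :
    (finFunctionFinEquiv u + finFunctionFinEquiv w : ℕ) = 2 * finFunctionFinEquiv v := by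
  simp only [finFunctionFinEquiv_apply, ← Finset.sum_add_distrib, Finset.mul_sum, ← add_mul, h,
    mul_assoc]

lemma digits_add_eq_two_mul_of_endpoint_bounds
    (h : (finFunctionFinEquiv u + finFunctionFinEquiv w : ℕ) = 2 * finFunctionFinEquiv v)
    (huv : ∀ i, (u i : ℕ) ≤ 2 * v i ∧ 2 * (v i : ℕ) < m + u i) (i : Fin d) :
    (u i : ℕ) + w i = 2 * v i := by
  let w' : Fin d → Fin m := fun i => ⟨2 * v i - u i, by have := huv i; omega⟩
  have hw' (i : Fin d) : (u i : ℕ) + w' i = 2 * v i := Nat.add_sub_cancel' (huv i).1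
  have h_eq : w = w' := finFunctionFinEquiv.injective <| Fin.ext <| by
    have := finFunctionFinEquiv_add_eq_two_mul hw'
    omega
  exact h_eq ▸ hw' i

lemma digits_add_eq_two_mul_of_mod_two_eq
    (h : (finFunctionFinEquiv u + finFunctionFinEquiv w : ℕ) = 2 * finFunctionFinEquiv v)
    (huw : ∀ i, (u i : ℕ) % 2 = w i % 2) (i : Fin d) :
    (u i : ℕ) + w i = 2 * v i := by
  let v' : Fin d → Fin m := fun i => ⟨(u i + w i) / 2, by omega⟩
  have hv' (i : Fin d) : (u i : ℕ) + w i = 2 * v' i := by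
    have := huw i
    simp only [v']
    omega
  have h_eq : v = v' := finFunctionFinEquiv.injective <| Fin.ext <| by
    have := finFunctionFinEquiv_add_eq_two_mul hv'
    omega
  exact h_eq ▸ hv' i

end DigitVectors

section SeparatingColorings

variable {m d : ℕ} {κ : Type*}

/-- Words of the same color agree in the digit class of every place, and differ in more than `r`
places unless they are equal. -/
def SeparatesDigits (r : ℕ) (c : (Fin d → Fin m) → κ) : Prop :=
  ∀ x y, c x = c y →
    (∀ i, digitClass (x i) = digitClass (y i)) ∧ (x ≠ y → r < hammingDist x y)

lemma exists_separatesDigits (m d r : ℕ) [NeZero m] :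
    ∃ c : (Fin d → Fin m) → Fin ((4 * (Nat.log 2 m + 1) ^ 2) ^ d * m ^ r),
      SeparatesDigits r c := by
  obtain ⟨C⟩ := colorable_hammingGraph (ι := Fin d) (α := Fin m) r
  let c (x : Fin d → Fin m) := (fun i => digitClass (x i), C x)
  have h_card : Fintype.card ((Fin d → Fin (Nat.log 2 m + 1) × Fin (Nat.log 2 m + 1) × Fin 2) ×
      Fin (2 ^ Fintype.card (Fin d) * Fintype.card (Fin m) ^ r)) =
      (4 * (Nat.log 2 m + 1) ^ 2) ^ d * m ^ r := by
    simp only [Fintype.card_prod, Fintype.card_fun, Fintype.card_fin, ← mul_assoc, ← mul_pow]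
    ring
  refine ⟨fun x => Fintype.equivFinOfCardEq h_card (c x), fun x y hxy => ?_⟩
  obtain ⟨h_class, h_code⟩ := Prod.mk.inj ((Fintype.equivFinOfCardEq h_card).injective hxy)
  refine ⟨congrFun h_class, fun hne => ?_⟩
  by_contra! h_close
  exact C.valid ⟨hne, h_close⟩ h_code

end SeparatingColorings

section Typical

open Finset
open scoped BigOperators

variable {m d : ℕ} {ε : ℝ}

/-- The sum of the squared digits is within `ε * d` of its mean over all words. -/
def IsTypical (ε : ℝ) (v : Fin d → Fin m) : Prop :=
  |∑ i, ((v i : ℝ) ^ 2 - 𝔼 x : Fin m, (x : ℝ) ^ 2)| ≤ ε * d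

lemma card_not_isTypical_le (m d : ℕ) [NeZero m] (hε : 0 ≤ ε)
    [DecidablePred (IsTypical ε : (Fin d → Fin m) → Prop)] :
    (#{v : Fin d → Fin m | ¬ IsTypical ε v} : ℝ) ≤
      2 * (Real.exp (-(2 * ε ^ 2 / ((m : ℝ) ^ 2) ^ 2) * d) * m ^ d) := by
  have h_range (x : Fin m) : (x : ℝ) ^ 2 ∈ Set.Icc 0 ((m : ℝ) ^ 2) :=
    ⟨by positivity, by gcongr; exact x.isLt.le⟩
  simpa [IsTypical] using card_filter_lt_abs_sum_sub_expect_le (Fin d) h_range hε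

variable {u v w : Fin d → Fin m}

lemma hammingDist_le_sum_sq_sub (u v : Fin d → Fin m) :
    (hammingDist u v : ℝ) ≤ ∑ i, ((u i : ℝ) - v i) ^ 2 := by
  rw [hammingDist, card_filter, Nat.cast_sum]
  refine sum_le_sum fun i _ => ?_
  split_ifs with hi
  · have h_sub : ((u i : ℕ) : ℤ) - (v i : ℕ) ≠ 0 := by omega
    exact_mod_cast Int.one_le_abs (pow_ne_zero 2 h_sub) |>.trans_eq (abs_of_nonneg (sq_nonneg _))
  · simpa using sq_nonneg ((u i : ℝ) - v i)

lemma hammingDist_eq_of_add_eq_two_mul (h : ∀ i, (u i : ℕ) + w i = 2 * v i) :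
    hammingDist u w = hammingDist u v := by
  refine congrArg card (filter_congr fun i _ => ?_)
  simp only [ne_eq, Fin.ext_iff]
  have := h i
  omega

lemma hammingDist_le_of_isTypical (h : ∀ i, (u i : ℕ) + w i = 2 * v i) (hu : IsTypical ε u)
    (hv : IsTypical ε v) (hw : IsTypical ε w) : (hammingDist u v : ℝ) ≤ 2 * ε * d := by
  let S (x : Fin d → Fin m) : ℝ := ∑ i, ((x i : ℝ) ^ 2 - 𝔼 y : Fin m, (y : ℝ) ^ 2)
  have h_identity : 2 * ∑ i, ((u i : ℝ) - v i) ^ 2 = S u + S w - 2 * S v := by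
    simp only [S, mul_sum, ← sum_add_distrib, ← sum_sub_distrib]
    refine sum_congr rfl fun i _ => ?_
    have h_digit : (u i : ℝ) + w i = 2 * v i := mod_cast h i
    rw [eq_sub_of_add_eq' h_digit]
    ring
  have hSu : S u ≤ ε * d := (abs_le.1 hu).2
  have hSv : -(ε * d) ≤ S v := (abs_le.1 hv).1
  have hSw : S w ≤ ε * d := (abs_le.1 hw).2
  linarith [hammingDist_le_sum_sq_sub u v]

end Typical

section RainbowDigits

variable {m d r : ℕ} {ε : ℝ} {κ : Type*} {c : (Fin d → Fin m) → κ} {u v w : Fin d → Fin m}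

lemma SeparatesDigits.eq_of_color_eq_middle (hc : SeparatesDigits r c) (hr : 2 * ε * d < r + 1)
    (h : (finFunctionFinEquiv u + finFunctionFinEquiv w : ℕ) = 2 * finFunctionFinEquiv v)
    (hu : IsTypical ε u) (hv : IsTypical ε v) (hw : IsTypical ε w) (huv : c u = c v) : u = v := by
  obtain ⟨h_class, h_far⟩ := hc u v huv
  have h_digits := digits_add_eq_two_mul_of_endpoint_bounds h
    fun i => le_two_mul_of_digitClass_eq (h_class i)
  have h_close : (hammingDist u v : ℝ) < r + 1 :=
    (hammingDist_le_of_isTypical h_digits hu hv hw).trans_lt hr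
  by_contra hne
  exact (h_far hne).not_ge (Nat.lt_succ_iff.1 (mod_cast h_close))

lemma SeparatesDigits.eq_of_color_eq_endpoint (hc : SeparatesDigits r c) (hr : 2 * ε * d < r + 1)
    (h : (finFunctionFinEquiv u + finFunctionFinEquiv w : ℕ) = 2 * finFunctionFinEquiv v)
    (hu : IsTypical ε u) (hv : IsTypical ε v) (hw : IsTypical ε w) (huw : c u = c w) : u = w := by
  obtain ⟨h_class, h_far⟩ := hc u w huw
  have h_digits := digits_add_eq_two_mul_of_mod_two_eq h
    fun i => mod_two_eq_of_digitClass_eq (h_class i)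
  have h_close : (hammingDist u w : ℝ) < r + 1 := by
    rw [hammingDist_eq_of_add_eq_two_mul h_digits]
    exact (hammingDist_le_of_isTypical h_digits hu hv hw).trans_lt hr
  by_contra hne
  exact (h_far hne).not_ge (Nat.lt_succ_iff.1 (mod_cast h_close))

/-- Every nontrivial 3-term arithmetic progression in `A` receives three distinct colors. -/
def IsRainbowOn (c : ℕ → κ) (A : Set ℕ) : Prop :=
  ∀ a t : ℕ, t ≠ 0 → a ∈ A → a + t ∈ A → a + 2 * t ∈ A →
    c a ≠ c (a + t) ∧ c a ≠ c (a + 2 * t) ∧ c (a + t) ≠ c (a + 2 * t)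

lemma SeparatesDigits.isRainbowOn [NeZero m] (hc : SeparatesDigits r c)
    (hr : 2 * ε * d < r + 1) :
    IsRainbowOn (fun a => c (digitVec m d a)) {a | a < m ^ d ∧ IsTypical ε (digitVec m d a)} := by
  rintro a t ht ⟨ha, hu⟩ ⟨hb, hv⟩ ⟨he, hw⟩
  have h_ap : (finFunctionFinEquiv (digitVec m d a) +
      finFunctionFinEquiv (digitVec m d (a + 2 * t)) : ℕ) =
      2 * finFunctionFinEquiv (digitVec m d (a + t)) := by
    rw [finFunctionFinEquiv_digitVec ha, finFunctionFinEquiv_digitVec hb,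
      finFunctionFinEquiv_digitVec he]
    ring
  refine ⟨fun h => ?_, fun h => ?_, fun h => ?_⟩
  · have := digitVec_injOn ha hb (hc.eq_of_color_eq_middle hr h_ap hu hv hw h)
    omega
  · have := digitVec_injOn ha he (hc.eq_of_color_eq_endpoint hr h_ap hu hv hw h)
    omega
  · have := digitVec_injOn he hb
      (hc.eq_of_color_eq_middle hr ((add_comm _ _).trans h_ap) hw hv hu h.symm)
    omega

end RainbowDigits

section Parameters

open Filter Real

lemma exists_base_sq_log_le_rpow {δ : ℝ} (hδ : 0 < δ) :
    ∃ m : ℕ, 2 ≤ m ∧ 4 * ((Nat.log 2 m : ℝ) + 1) ^ 2 ≤ (m : ℝ) ^ δ := by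
  have h_tendsto := tendsto_pow_const_div_const_pow_of_one_lt 2 (one_lt_rpow one_lt_two hδ)
  obtain ⟨j, hj, hj_one⟩ := ((h_tendsto.eventually (gt_mem_nhds
    (show (0 : ℝ) < 1 / 16 by norm_num))).and (eventually_ge_atTop 1)).exists
  rw [div_lt_iff₀ (by positivity)] at hj
  refine ⟨2 ^ j, le_self_pow₀ one_le_two (Nat.one_le_iff_ne_zero.1 hj_one), ?_⟩
  have hj_real : (1 : ℝ) ≤ j := mod_cast hj_one
  calc 4 * ((Nat.log 2 (2 ^ j) : ℝ) + 1) ^ 2 = 4 * ((j : ℝ) + 1) ^ 2 := by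
        rw [Nat.log_pow one_lt_two]
    _ ≤ 16 * (j : ℝ) ^ 2 := by nlinarith
    _ ≤ ((2 : ℝ) ^ δ) ^ j := by linarith
    _ = ((2 ^ j : ℕ) : ℝ) ^ δ := by
        rw [Nat.cast_pow, Nat.cast_ofNat, ← rpow_mul_natCast zero_le_two,
          ← rpow_natCast_mul zero_le_two, mul_comm]

variable {m : ℕ}

lemma exists_eventually_exp_mul_pow_log_le_rpow (hm : 2 ≤ m) {γ : ℝ} (hγ : 0 < γ) :
    ∃ α : ℝ, α < 1 ∧ ∀ᶠ n : ℕ in atTop,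
      2 * (exp (-γ * (Nat.log m n + 1 : ℕ)) * (m : ℝ) ^ (Nat.log m n + 1)) ≤ (n : ℝ) ^ α := by
  have hm_one : (1 : ℝ) < m := mod_cast hm
  have hm_pos : (0 : ℝ) < m := by positivity
  obtain ⟨η, hη, h_exp⟩ : ∃ η : ℝ, 0 < η ∧ exp γ = (m : ℝ) ^ η :=
    ⟨γ / log m, div_pos hγ (log_pos hm_one), by
      rw [rpow_def_of_pos hm_pos, mul_div_cancel₀ _ (log_pos hm_one).ne']⟩
  have h_large : ∀ᶠ n : ℕ in atTop, 2 * (m : ℝ) ≤ (n : ℝ) ^ (η / 2) :=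
    ((tendsto_rpow_atTop (half_pos hη)).comp tendsto_natCast_atTop_atTop).eventually_ge_atTop _
  refine ⟨1 - η / 2, by linarith, ?_⟩
  filter_upwards [h_large, eventually_ne_atTop 0] with n hn hn_ne
  have hn_pos : (0 : ℝ) < n := mod_cast Nat.pos_of_ne_zero hn_ne
  have h_lt : (n : ℝ) ≤ (m : ℝ) ^ (Nat.log m n + 1) :=
    mod_cast (Nat.lt_pow_succ_log_self hm n).le
  have h_le : (m : ℝ) ^ (Nat.log m n + 1) ≤ m * n := by
    rw [pow_succ']
    gcongr
    exact_mod_cast Nat.pow_log_le_self m hn_ne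
  have h_decay : exp (-γ * (Nat.log m n + 1 : ℕ)) ≤ (n : ℝ) ^ (-η) := by
    calc exp (-γ * (Nat.log m n + 1 : ℕ)) = ((m : ℝ) ^ (Nat.log m n + 1)) ^ (-η) := by
          rw [← rpow_natCast_mul hm_pos.le, mul_comm _ (-η), rpow_mul_natCast hm_pos.le,
            rpow_neg hm_pos.le, ← h_exp, ← exp_neg, ← exp_nat_mul, mul_comm]
      _ ≤ (n : ℝ) ^ (-η) := rpow_le_rpow_of_nonpos hn_pos h_lt (neg_nonpos.2 hη.le)
  calc 2 * (exp (-γ * (Nat.log m n + 1 : ℕ)) * (m : ℝ) ^ (Nat.log m n + 1))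
      ≤ 2 * ((n : ℝ) ^ (-η) * (m * n)) := by gcongr
    _ = 2 * m * (n : ℝ) ^ (1 - η) := by rw [sub_eq_add_neg, rpow_add hn_pos, rpow_one]; ring
    _ ≤ (n : ℝ) ^ (η / 2) * (n : ℝ) ^ (1 - η) := by gcongr
    _ = (n : ℝ) ^ (1 - η / 2) := by rw [← rpow_add hn_pos]; ring_nf

lemma rpow_half_mul_log_succ_le {n : ℕ} (hm : 2 ≤ m) (hn : m ≤ n) {β : ℝ} (hβ : 0 ≤ β) :
    (m : ℝ) ^ (β / 2 * (Nat.log m n + 1 : ℕ)) ≤ (n : ℝ) ^ β := by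
  have h_log : (1 : ℝ) ≤ Nat.log m n := mod_cast Nat.log_pos hm hn
  have hm_one : (1 : ℝ) ≤ m := mod_cast one_le_two.trans hm
  calc (m : ℝ) ^ (β / 2 * (Nat.log m n + 1 : ℕ)) ≤ (m : ℝ) ^ (Nat.log m n * β) := by
        refine rpow_le_rpow_of_exponent_le hm_one ?_
        push_cast
        nlinarith
    _ = ((m : ℝ) ^ Nat.log m n) ^ β := rpow_natCast_mul (by positivity) _ _
    _ ≤ (n : ℝ) ^ β := by
        gcongr
        exact_mod_cast Nat.pow_log_le_self m (by omega)

end Parameters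

section Block

open Finset

lemma card_not_isTypical_digitVec_le {m : ℕ} [NeZero m] (d : ℕ) {ε : ℝ}
    [DecidablePred (IsTypical ε : (Fin d → Fin m) → Prop)] :
    #{a ∈ range (m ^ d) | ¬ IsTypical ε (digitVec m d a)} ≤
      #{v : Fin d → Fin m | ¬ IsTypical ε v} := by
  refine card_le_card_of_injOn (digitVec m d) (fun a ha => ?_) (digitVec_injOn.mono fun a ha => ?_)
  · simpa using (mem_filter.1 ha).2
  · exact mem_range.1 (mem_filter.1 ha).1

lemma exists_isRainbowOn_range_pow {δ : ℝ} (hδ : 0 < δ) :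
    ∃ m : ℕ, 2 ≤ m ∧ ∃ γ : ℝ, 0 < γ ∧ ∀ d : ℕ, ∃ B : Finset ℕ,
      (#(range (m ^ d) \ B) : ℝ) ≤ 2 * (Real.exp (-γ * d) * m ^ d) ∧
      ∃ k : ℕ, (k : ℝ) ≤ (m : ℝ) ^ (δ * d) ∧ ∃ c : ℕ → Fin k, IsRainbowOn c B := by
  classical
  obtain ⟨m, hm, h_base⟩ := exists_base_sq_log_le_rpow (half_pos hδ)
  have hm_pos : (0 : ℝ) < m := by positivity
  have : NeZero m := ⟨by omega⟩
  refine ⟨m, hm, 2 * (δ / 4) ^ 2 / ((m : ℝ) ^ 2) ^ 2, by positivity, fun d => ?_⟩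
  obtain ⟨c, hc⟩ := exists_separatesDigits m d ⌊δ / 2 * d⌋₊
  have h_radius : 2 * (δ / 4) * d < ⌊δ / 2 * d⌋₊ + 1 := by
    linarith [Nat.lt_floor_add_one (δ / 2 * d)]
  refine ⟨{a ∈ range (m ^ d) | IsTypical (δ / 4) (digitVec m d a)}, ?_, _, ?_,
    fun a => c (digitVec m d a), ?_⟩
  · rw [← filter_not]
    exact (Nat.cast_le.2 (card_not_isTypical_digitVec_le d)).trans
      (card_not_isTypical_le m d (by positivity))
  · push_cast
    calc (4 * ((Nat.log 2 m : ℝ) + 1) ^ 2) ^ d * (m : ℝ) ^ ⌊δ / 2 * d⌋₊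
        ≤ ((m : ℝ) ^ (δ / 2)) ^ d * (m : ℝ) ^ (δ / 2 * d) := by
          rw [← Real.rpow_natCast (m : ℝ) ⌊_⌋₊]
          gcongr
          · exact_mod_cast one_le_two.trans hm
          · exact Nat.floor_le (by positivity)
      _ = (m : ℝ) ^ (δ * d) := by
          rw [← Real.rpow_mul_natCast hm_pos.le, ← Real.rpow_add hm_pos]
          ring_nf
  · simpa using hc.isRainbowOn h_radius

lemma sub_card_sdiff_le_card_inter {α : Type*} [DecidableEq α] {s t B : Finset α}
    (h : s ⊆ t) :
    (#s : ℝ) - #(t \ B) ≤ #(s ∩ B) := by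
  have h_card : #s ≤ #(t \ B) + #(s ∩ B) := by
    rw [← card_sdiff_add_card_inter s B]
    gcongr
  rw [sub_le_iff_le_add']
  exact_mod_cast h_card

end Block

/-- main theorem: For every `β > 0` there is `α < 1` such that
for all sufficiently large `n`, some `A ⊆ {1,…,n}` with `|A| ≥ n - n^α` admits
a coloring with at most `n^β` colors under which every 3-term arithmetic
progression in `A` is rainbow. -/
theorem stmt_12 :
    ∀ β : ℝ, 0 < β → ∃ α : ℝ, α < 1 ∧ ∃ N : ℕ, ∀ n : ℕ, N ≤ n →
      ∃ A : Finset ℕ, A ⊆ Finset.Icc 1 n ∧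
        (n : ℝ) - (n : ℝ) ^ α ≤ (A.card : ℝ) ∧
        ∃ c : ℕ → ℕ,
          (∀ a ∈ A, c a ∈ Finset.Icc 1 ⌊(n : ℝ) ^ β⌋₊) ∧
          (∀ a t : ℕ, t ≠ 0 → a ∈ A → a + t ∈ A → a + 2 * t ∈ A →
            c a ≠ c (a + t) ∧ c a ≠ c (a + 2 * t) ∧ c (a + t) ≠ c (a + 2 * t)) := by
  intro β hβ
  obtain ⟨m, hm, γ, hγ, h_block⟩ := exists_isRainbowOn_range_pow (half_pos hβ)
  obtain ⟨α, hα, h_eventually⟩ := exists_eventually_exp_mul_pow_log_le_rpow hm hγ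
  obtain ⟨N, hN⟩ := Filter.eventually_atTop.1 h_eventually
  refine ⟨α, hα, max N m, fun n hn => ?_⟩
  obtain ⟨B, h_exceptional, k, hk, c, hc⟩ := h_block (Nat.log m n + 1)
  refine ⟨Finset.Icc 1 n ∩ B, Finset.inter_subset_left, ?_, fun a => c a + 1, ?_, ?_⟩
  · have h_subset : Finset.Icc 1 n ⊆ Finset.range (m ^ (Nat.log m n + 1)) := fun a ha =>
      Finset.mem_range.2 ((Finset.mem_Icc.1 ha).2.trans_lt (Nat.lt_pow_succ_log_self hm n))
    have h_card := sub_card_sdiff_le_card_inter (B := B) h_subset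
    rw [Nat.card_Icc, Nat.add_sub_cancel] at h_card
    linarith [hN n (le_of_max_le_left hn)]
  · have h_colors : k ≤ ⌊(n : ℝ) ^ β⌋₊ :=
      Nat.le_floor (hk.trans (rpow_half_mul_log_succ_le hm (le_of_max_le_right hn) hβ.le))
    exact fun a _ => Finset.mem_Icc.2 ⟨Nat.succ_pos _, (c a).isLt.trans_le h_colors⟩
  · intro a t ht ha hb he
    have := hc a t ht (Finset.mem_inter.1 ha).2 (Finset.mem_inter.1 hb).2 (Finset.mem_inter.1 he).2
    simpa only [ne_eq, Nat.add_right_cancel_iff, Fin.val_inj] using this
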